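/- Let p be a prime with p ≡ 1 (mod 8) such that (2/p)₄ = (p/2)₄ = −1, k = ℚ(√(2p), i), and let H be the prime ideal of O_k above 1+i. Then the class [H] has order 2 in Cl(k), and [H] is a square in Cl(k): there exists σ ∈ Cl(k) of order 4 with σ² = [H]. -/

import Mathlib

/-!
Put `ω = (1 + i) √(2p) / 2`, so that `ω² = i p`. The class of `H` is a square because
`x² - (1 + i) z² = i p` is solvable over `ℤ[i]`: then `(x - ω) (x + ω) = (1 + i) z²`, both factors
lie in `H` and are coprime after division by `H`, so `(x - ω) = H A²` and `[H] = [A]⁻²`. To solve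
the equation, note that the hypothesis on the biquadratic symbols makes `1 + i` a square `a²` modulo
`p`. A short vector of the Hermitian form `2 |x|² + 3 |z|²` on the lattice `x ≡ a z (mod p)`
gives `x² - (1 + i) z² = m p` with `|m|² ≤ 3`, so that `m` is `1` or `1 + i` up to units, and `m` is
corrected to `i` by multiplicativity of relative norms from `ℤ[i][√(1 + i)]`.

If `H = (h)`, then `h h̄` is a totally positive integer of `ℚ(√(2p))` of norm `2`, which gives
`2 x² - p y² = 1` in integers. Since `2` is a square modulo `y`, this forces `y² ≡ 1 (mod 16)`, and
`p ≡ 9 (mod 16)` yields the impossible `x² ≡ 5 (mod 8)`.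
-/

/- STATEMENT 19: Let p ≡ 1 (mod 8) be prime with (2/p)₄ = (p/2)₄ = −1, k = ℚ(√(2p), i),
H the prime of O_k above 1+i (H² = (1+i)O_k). Then the class [H] has order 2 in Cl(k)
and [H] is a square: there is σ ∈ Cl(k) of order 4 with σ² = [H]. -/

open Complex NumberField IntermediateField Polynomial nonZeroDivisors

noncomputable section

lemma integral_of_pow_rat {x : ℂ} {n : ℕ} (hn : n ≠ 0) {q : ℚ} (h : x ^ n = (q : ℂ)) :
    IsIntegral ℚ x := by
  refine ⟨X ^ n - C q, monic_X_pow_sub_C q hn, ?_⟩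
  simp [h]

/-- k = ℚ(√(2p), i) as a subfield of ℂ. -/
def kfield (p : ℕ) : IntermediateField ℚ ℂ := ℚ⟮(Real.sqrt (2 * p) : ℂ), (Complex.I : ℂ)⟯

instance (p : ℕ) : FiniteDimensional ℚ (kfield p) := by
  apply IntermediateField.finiteDimensional_adjoin
  rintro x hx
  simp only [Set.mem_insert_iff, Set.mem_singleton_iff] at hx
  rcases hx with rfl | rfl
  · refine integral_of_pow_rat two_ne_zero (q := 2 * p) ?_
    push_cast
    norm_cast
    exact_mod_cast Real.sq_sqrt (by positivity)
  · exact integral_of_pow_rat two_ne_zero (q := -1) (by simp [Complex.I_sq])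

instance (p : ℕ) : NumberField (kfield p) := ⟨⟩

local notation "ℤ[i]" => GaussianInt

local notation "ι" => (Zsqrtd.sqrtd : GaussianInt)

/-! ### Integers -/

lemma sq_emod_sixteen_of_dvd_two_mul_sq_sub_one {x y : ℤ} (h : y ∣ 2 * x ^ 2 - 1) :
    y ^ 2 % 16 = 1 := by
  obtain ⟨t, ht⟩ := h
  have hodd : Odd y.natAbs := by
    rw [Int.natAbs_odd]
    exact Int.Odd.of_mul_left (n := t) (by rw [← ht]; exact ⟨x ^ 2 - 1, by ring⟩)
  have hcop : x.gcd y.natAbs = 1 := by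
    have hgcd : x.gcd y.natAbs = x.gcd y := by simp [Int.gcd, Int.natAbs_abs]
    rw [hgcd, ← Int.isCoprime_iff_gcd_eq_one]
    exact ⟨2 * x, -t, by linear_combination ht⟩
  have hmod : 2 * x ^ 2 % (y.natAbs : ℤ) = 1 % y.natAbs :=
    Int.emod_eq_emod_iff_emod_sub_eq_zero.mpr <| Int.emod_eq_zero_of_dvd <|
      Int.natAbs_dvd.mpr ⟨t, ht⟩
  have hJ : jacobiSym 2 y.natAbs = 1 := by
    have h1 := (jacobiSym.mod_left' hmod).trans (jacobiSym.one_left _)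
    rwa [jacobiSym.mul_left, jacobiSym.sq_one' hcop, mul_one] at h1
  rw [jacobiSym.at_two hodd, ZMod.χ₈_nat_eq_if_mod_eight] at hJ
  have hy : y % 16 = 1 ∨ y % 16 = 7 ∨ y % 16 = 9 ∨ y % 16 = 15 := by
    split_ifs at hJ <;> omega
  rcases hy with hy | hy | hy | hy <;> simp [pow_two, Int.mul_emod, hy]

lemma two_mul_sq_sub_mul_sq_ne_one {n : ℤ} (hn : n % 16 = 9) (x y : ℤ) :
    2 * x ^ 2 - n * y ^ 2 ≠ 1 := by
  intro h
  have hy : y ^ 2 % 16 = 1 :=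
    sq_emod_sixteen_of_dvd_two_mul_sq_sub_one (x := x) ⟨n * y, by linear_combination h⟩
  have hny : n * y ^ 2 % 16 = 9 := by rw [Int.mul_emod, hn, hy]; rfl
  have hx : x ^ 2 % 8 = 5 := by omega
  have hsq : ∀ t : ZMod 8, t ^ 2 ≠ 5 := by decide
  apply hsq x
  exact_mod_cast (ZMod.intCast_eq_intCast_iff' (x ^ 2) 5 8).mpr hx

lemma sq_sub_two_mul_mul_sq_ne_eight {n : ℤ} (hn : n % 16 = 9) (a b : ℤ) :
    a ^ 2 - 2 * n * b ^ 2 ≠ 8 := by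
  intro h
  have two_dvd {t : ℤ} (ht : 2 ∣ t ^ 2) : 2 ∣ t := Int.prime_two.dvd_of_dvd_pow ht
  obtain ⟨a, rfl⟩ : 2 ∣ a := two_dvd ⟨4 + n * b ^ 2, by linear_combination h⟩
  obtain ⟨b, rfl⟩ : 2 ∣ b := by
    refine two_dvd ((Int.prime_two.dvd_mul (a := n)).mp ⟨a ^ 2 - 2, ?_⟩ |>.resolve_left (by omega))
    linarith
  obtain ⟨a, rfl⟩ : 2 ∣ a := two_dvd ⟨1 + n * b ^ 2, by linarith⟩
  exact two_mul_sq_sub_mul_sq_ne_one hn a b (by linarith)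

/-! ### Integrality and norms in quadratic algebras -/

lemma isIntegral_of_isIntegral_mul_sq {R K : Type*} [CommRing R] [Field K] [Algebra R K]
    [IsFractionRing R K] [IsIntegrallyClosed R] {r : R} (hr : IsRadical r) (hr0 : r ≠ 0) {q : K}
    (h : IsIntegral R (algebraMap R K r * q ^ 2)) : IsIntegral R q := by
  have hrq : IsIntegral R (algebraMap R K r * q) := by
    refine .of_pow two_pos ?_
    rw [show (algebraMap R K r * q) ^ 2 = algebraMap R K r * (algebraMap R K r * q ^ 2) by ring]
    exact isIntegral_algebraMap.mul h
  obtain ⟨m, hm⟩ := IsIntegrallyClosed.isIntegral_iff.mp h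
  obtain ⟨c, hc⟩ := IsIntegrallyClosed.isIntegral_iff.mp hrq
  have hcm : c ^ 2 = r * m := by
    apply IsFractionRing.injective R K
    simp only [map_pow, map_mul, hc, hm]
    ring
  obtain ⟨k, rfl⟩ : r ∣ c := hr 2 c ⟨m, hcm⟩
  have hr0' : algebraMap R K r ≠ 0 := by
    simpa using hr0
  rw [map_mul, mul_right_inj' hr0'] at hc
  exact hc ▸ isIntegral_algebraMap

section QuadraticAlgebra

variable {R : Type*} [CommRing R] {a b : R}

lemma isIntegral_quadraticAlgebra_star {w : QuadraticAlgebra R a b} (hw : IsIntegral ℤ w) :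
    IsIntegral ℤ (star w) :=
  hw.map (starRingEnd (QuadraticAlgebra R a b)).toIntAlgHom

lemma isIntegral_quadraticAlgebra_trace {w : QuadraticAlgebra R a b} (hw : IsIntegral ℤ w) :
    IsIntegral ℤ w.trace := by
  rw [← isIntegral_algebraMap_iff (QuadraticAlgebra.algebraMap_injective (a := a) (b := b)),
    QuadraticAlgebra.algebraMap_trace_eq_add_star]
  exact hw.add (isIntegral_quadraticAlgebra_star hw)

lemma isIntegral_quadraticAlgebra_norm {w : QuadraticAlgebra R a b} (hw : IsIntegral ℤ w) :
    IsIntegral ℤ w.norm := by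
  rw [← isIntegral_algebraMap_iff (QuadraticAlgebra.algebraMap_injective (a := a) (b := b)),
    QuadraticAlgebra.algebraMap_norm_eq_mul_star]
  exact hw.mul (isIntegral_quadraticAlgebra_star hw)

lemma quadraticAlgebra_norm_sq_add_sq (u v : QuadraticAlgebra R a b) :
    (u ^ 2 + v ^ 2).norm = (u.norm - v.norm) ^ 2 + (u * star v).trace ^ 2 := by
  simp only [QuadraticAlgebra.norm_def, QuadraticAlgebra.trace_def, pow_two,
    QuadraticAlgebra.re_add, QuadraticAlgebra.im_add, QuadraticAlgebra.re_mul,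
    QuadraticAlgebra.im_mul, QuadraticAlgebra.re_star, QuadraticAlgebra.im_star]
  ring

end QuadraticAlgebra

/-! ### Reduction of binary Hermitian forms over `ℤ[i]` -/

lemma isRadical_zsqrtd_natCast {p : ℕ} (hp : p.Prime) {d : ℤ} (hd : ¬ (p : ℤ) ∣ 2 * d) :
    IsRadical (p : ℤ√d) := by
  have hpZ : Prime (p : ℤ) := Nat.prime_iff_prime_int.mp hp
  have h2 : ¬ (p : ℤ) ∣ 2 := fun h => hd (h.mul_right d)
  have hd' : ¬ (p : ℤ) ∣ d := fun h => hd (h.mul_left 2)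
  rw [isRadical_iff_pow_one_lt 2 one_lt_two]
  intro w hw
  rw [← Int.cast_natCast, Zsqrtd.intCast_dvd] at hw ⊢
  simp only [pow_two, Zsqrtd.re_mul, Zsqrtd.im_mul] at hw
  obtain ⟨hre, him⟩ := hw
  have him' : (p : ℤ) ∣ 2 * (w.re * w.im) := by convert him using 1; ring
  rcases hpZ.dvd_or_dvd (hpZ.dvd_or_dvd him' |>.resolve_left h2) with h | h
  · have : (p : ℤ) ∣ d * w.im * w.im := (dvd_add_right (h.mul_right _)).mp hre
    exact ⟨h, hpZ.dvd_or_dvd this |>.elim (hpZ.dvd_or_dvd · |>.resolve_left hd') id⟩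
  · exact ⟨hpZ.dvd_or_dvd ((dvd_add_left (h.mul_left _)).mp hre) |>.elim id id, h⟩

lemma gaussianInt_norm_eq (x : ℤ[i]) : x.norm = x.re ^ 2 + x.im ^ 2 := by
  rw [Zsqrtd.norm_def]; ring

lemma two_mul_norm_mod_le (x : ℤ[i]) {y : ℤ[i]} (hy : y ≠ 0) : 2 * (x % y).norm ≤ y.norm := by
  have hy' : (y : ℂ) ≠ 0 := by simpa using hy
  have hround : normSq ((x / y : ℂ) - (x / y : ℤ[i])) ≤ 1 / 2 := by
    have hre := abs_le.mp (abs_sub_round (x / y : ℂ).re)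
    have him := abs_le.mp (abs_sub_round (x / y : ℂ).im)
    rw [← GaussianInt.toComplex_re_div] at hre
    rw [← GaussianInt.toComplex_im_div] at him
    rw [normSq_apply, sub_re, sub_im]
    nlinarith
  have hmod : ((x % y).norm : ℝ) = normSq y * normSq ((x / y : ℂ) - (x / y : ℤ[i])) := by
    rw [← normSq_mul, mul_sub, mul_div_cancel₀ _ hy', GaussianInt.intCast_real_norm]
    simp only [GaussianInt.mod_def, map_sub, map_mul]
  have : 2 * ((x % y).norm : ℝ) ≤ y.norm := by
    rw [hmod, GaussianInt.intCast_real_norm]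
    nlinarith [normSq_nonneg (y : ℂ)]
  exact_mod_cast this

/-- The binary Hermitian form `A |x|² + 2 Re(B x z̄) + C |z|²` over `ℤ[i]`; its determinant is
`A C - |B|²`. -/
def hermForm (A C : ℤ) (B x z : ℤ[i]) : ℤ :=
  A * x.norm + 2 * (B * x * star z).re + C * z.norm

lemma hermForm_one_zero (A C : ℤ) (B : ℤ[i]) : hermForm A C B 1 0 = A := by
  simp [hermForm]

lemma hermForm_swap (A C : ℤ) (B x z : ℤ[i]) : hermForm C A (star B) z x = hermForm A C B x z := by
  simp only [hermForm, gaussianInt_norm_eq, Zsqrtd.re_mul, Zsqrtd.im_mul, Zsqrtd.re_star,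
    Zsqrtd.im_star]
  ring

lemma hermForm_shear (A C : ℤ) (B q x z : ℤ[i]) :
    hermForm A (hermForm A C B (-star q) 1) (B - A * q) x z =
      hermForm A C B (x - star q * z) z := by
  simp only [hermForm, gaussianInt_norm_eq, Zsqrtd.re_mul, Zsqrtd.im_mul, Zsqrtd.re_star,
    Zsqrtd.im_star, Zsqrtd.re_sub, Zsqrtd.im_sub, Zsqrtd.re_neg, Zsqrtd.im_neg, Zsqrtd.re_intCast,
    Zsqrtd.im_intCast, Zsqrtd.re_one, Zsqrtd.im_one]
  ring

lemma hermForm_shear_det (A C : ℤ) (B q : ℤ[i]) :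
    A * hermForm A C B (-star q) 1 - (B - A * q).norm = A * C - B.norm := by
  simp only [hermForm, gaussianInt_norm_eq, Zsqrtd.re_mul, Zsqrtd.im_mul, Zsqrtd.re_star,
    Zsqrtd.im_star, Zsqrtd.re_sub, Zsqrtd.im_sub, Zsqrtd.re_neg, Zsqrtd.im_neg, Zsqrtd.re_intCast,
    Zsqrtd.im_intCast, Zsqrtd.re_one, Zsqrtd.im_one]
  ring

theorem exists_hermForm_sq_le {A C : ℤ} {B : ℤ[i]} (hA : 0 < A) (hdet : 0 < A * C - B.norm) :
    ∃ x z : ℤ[i], (x ≠ 0 ∨ z ≠ 0) ∧ hermForm A C B x z ^ 2 ≤ 2 * (A * C - B.norm) := by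
  induction hn : A.toNat using Nat.strong_induction_on generalizing A B C with
  | _ n ih =>
    have hA0 : (A : ℤ[i]) ≠ 0 := by exact_mod_cast hA.ne'
    set q := B / A
    set C' := hermForm A C B (-star q) 1 with hC'
    have hdet' : A * C' - (B - A * q).norm = A * C - B.norm := hermForm_shear_det A C B q
    have hB' : 2 * (B - A * q).norm ≤ A ^ 2 := by
      simpa only [GaussianInt.mod_def, Zsqrtd.norm_intCast, ← pow_two]
        using two_mul_norm_mod_le B hA0
    rcases le_or_gt A C' with hle | hlt
    · refine ⟨1, 0, Or.inl one_ne_zero, ?_⟩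
      rw [hermForm_one_zero]
      nlinarith
    · have hC'pos : 0 < C' := by
        have := GaussianInt.norm_nonneg (B - A * q)
        exact pos_of_mul_pos_right (by linarith) hA.le
      have hswap : C' * A - (star (B - A * q)).norm = A * C - B.norm := by
        rw [Zsqrtd.norm_conj, ← hdet', mul_comm]
      obtain ⟨x, z, hne, hle⟩ := ih C'.toNat (by omega) hC'pos (hswap ▸ hdet) rfl
      rw [hermForm_swap, hC', hermForm_shear, ← hC', hswap] at hle
      refine ⟨z - star q * x, x, ?_, hle⟩
      by_contra! h
      obtain ⟨hz, rfl⟩ := h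
      simp_all

/-- A short vector of the lattice `x ≡ a z (mod m)`, on which `A |x|² + C |z|²` is a Hermitian form
of determinant `A C |m|²` in the coordinates `z` and `(x - a z) / m`. -/
lemma exists_dvd_sub_mul_and_sq_le {A C : ℤ} (hA : 0 < A) (hC : 0 < C) (a : ℤ[i]) {m : ℤ[i]}
    (hm : m ≠ 0) :
    ∃ x z : ℤ[i], (x ≠ 0 ∨ z ≠ 0) ∧ m ∣ x - a * z ∧
      (A * x.norm + C * z.norm) ^ 2 ≤ 2 * (A * C * m.norm) := by
  have hdet : (A * a.norm + C) * (A * m.norm) - (A * a * star m).norm = A * C * m.norm := by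
    rw [Zsqrtd.norm_mul, Zsqrtd.norm_mul, Zsqrtd.norm_conj, Zsqrtd.norm_intCast]
    ring
  have ha := GaussianInt.norm_nonneg a
  have hm' := GaussianInt.norm_pos.mpr hm
  obtain ⟨z, t, hne, hle⟩ := exists_hermForm_sq_le (A := A * a.norm + C) (C := A * m.norm)
    (B := A * a * star m) (by positivity) (by rw [hdet]; positivity)
  have hform : hermForm (A * a.norm + C) (A * m.norm) (A * a * star m) z t =
      A * (a * z + m * t).norm + C * z.norm := by
    simp only [hermForm, gaussianInt_norm_eq, Zsqrtd.re_mul, Zsqrtd.im_mul, Zsqrtd.re_star,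
      Zsqrtd.im_star, Zsqrtd.re_add, Zsqrtd.im_add, Zsqrtd.re_intCast, Zsqrtd.im_intCast]
    ring
  rw [hform, hdet] at hle
  refine ⟨a * z + m * t, z, ?_, ⟨t, by ring⟩, hle⟩
  rcases eq_or_ne z 0 with rfl | hz
  · simpa [hm] using hne
  · exact Or.inr hz

/-! ### Small elements of `ℤ[i]` -/

lemma toComplex_sqrtd : GaussianInt.toComplex ι = I := by
  simp [GaussianInt.toComplex_def]

lemma isUnit_sqrtd : IsUnit ι :=
  .of_mul_eq_one (-ι) rfl

lemma exists_sqrtd_pow_eq_of_isUnit {u : ℤ[i]} (hu : IsUnit u) : ∃ k : ℕ, ι ^ k = u := by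
  rw [← Zsqrtd.norm_eq_one_iff' (by norm_num), gaussianInt_norm_eq] at hu
  have hre : u.re ^ 2 ≤ 1 := by nlinarith
  obtain ⟨x, y⟩ := u
  dsimp only at *
  have h1 := abs_le.mp ((sq_le_one_iff_abs_le_one x).mp hre)
  have h2 := abs_le.mp ((sq_le_one_iff_abs_le_one y).mp (by nlinarith))
  obtain ⟨hx, hx'⟩ := h1
  obtain ⟨hy, hy'⟩ := h2
  interval_cases x <;> interval_cases y <;> try omega
  · exact ⟨2, rfl⟩
  · exact ⟨3, rfl⟩
  · exact ⟨1, rfl⟩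
  · exact ⟨0, rfl⟩

lemma one_add_sqrtd_dvd_iff {x : ℤ[i]} : 1 + ι ∣ x ↔ 2 ∣ x.norm := by
  rw [gaussianInt_norm_eq]
  constructor
  · rintro ⟨y, rfl⟩
    exact ⟨y.norm, by rw [← gaussianInt_norm_eq, Zsqrtd.norm_mul]; rfl⟩
  · intro h
    obtain ⟨t, ht⟩ : 2 ∣ x.re + x.im := by
      refine Int.prime_two.dvd_of_dvd_pow (n := 2) ?_
      rw [show (x.re + x.im) ^ 2 = x.re ^ 2 + x.im ^ 2 + 2 * (x.re * x.im) by ring]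
      exact h.add (dvd_mul_right _ _)
    refine ⟨⟨t, t - x.re⟩, Zsqrtd.ext ?_ ?_⟩
    · simp
    · rw [show x.im = 2 * t - x.re by linarith]
      simp
      ring

lemma prime_one_add_sqrtd : Prime (1 + ι) := by
  refine ⟨by decide, ?_, fun a b => ?_⟩
  · rw [← Zsqrtd.norm_eq_one_iff]; decide
  · simp only [one_add_sqrtd_dvd_iff, Zsqrtd.norm_mul]
    exact Int.prime_two.dvd_or_dvd

lemma associated_one_or_of_norm_le_three {m : ℤ[i]} (hm0 : m ≠ 0) (hm : m.norm ≤ 3) :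
    Associated m 1 ∨ Associated m (1 + ι) := by
  have hpos := GaussianInt.norm_pos.mpr hm0
  by_cases h : 1 + ι ∣ m
  · obtain ⟨u, rfl⟩ := h
    right
    have hu : IsUnit u := by
      rw [← Zsqrtd.norm_eq_one_iff' (by norm_num)]
      rw [Zsqrtd.norm_mul, show (1 + ι).norm = 2 from rfl] at hm hpos
      omega
    exact associated_mul_unit_left _ _ hu
  · left
    rw [associated_one_iff_isUnit, ← Zsqrtd.norm_eq_one_iff' (by norm_num)]
    rw [one_add_sqrtd_dvd_iff] at h
    have h3 : m.norm ≠ 3 := by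
      rw [gaussianInt_norm_eq]
      intro h3
      have h4 := congrArg (Int.cast : ℤ → ZMod 4) h3
      push_cast at h4
      exact (by decide : ∀ s t : ZMod 4, s ^ 2 + t ^ 2 ≠ 3) _ _ h4
    omega

/-! ### Relative norms from `ℤ[i][√(1 + i)]` -/

/-- The ring `ℤ[i][√(1 + i)]`. Its relative norm to `ℤ[i]` is the form `x² - (1 + i) z²`, so that
values of this form are multiplicatively closed. -/
abbrev GaussSqrt : Type := QuadraticAlgebra ℤ[i] (1 + ι) 0

namespace GaussSqrt

open QuadraticAlgebra (norm)

lemma norm_eq (ξ : GaussSqrt) : norm ξ = ξ.re ^ 2 - (1 + ι) * ξ.im ^ 2 := by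
  rw [QuadraticAlgebra.norm_def]; ring

lemma four_mul_norm_norm_le (ξ : GaussSqrt) :
    4 * (norm ξ).norm ≤ (2 * ξ.re.norm + 3 * ξ.im.norm) ^ 2 := by
  have hι : ‖1 + I‖ ≤ 3 / 2 := by
    rw [← sq_le_sq₀ (norm_nonneg _) (by norm_num), ← normSq_eq_norm_sq]
    norm_num [normSq_apply]
  have hcast : ((norm ξ : ℤ[i]) : ℂ) = (ξ.re : ℂ) ^ 2 - (1 + I) * (ξ.im : ℂ) ^ 2 := by
    simp only [norm_eq, map_sub, map_mul, map_pow, map_add, map_one, toComplex_sqrtd]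
  have hle : 2 * ‖((norm ξ : ℤ[i]) : ℂ)‖ ≤ 2 * ‖(ξ.re : ℂ)‖ ^ 2 + 3 * ‖(ξ.im : ℂ)‖ ^ 2 := by
    have := norm_sub_le ((ξ.re : ℂ) ^ 2) ((1 + I) * (ξ.im : ℂ) ^ 2)
    rw [← hcast, norm_mul, norm_pow, norm_pow] at this
    nlinarith [sq_nonneg ‖(ξ.im : ℂ)‖]
  have hsq := pow_le_pow_left₀ (by positivity) hle 2
  rw [mul_pow] at hsq
  simp only [← normSq_eq_norm_sq, ← GaussianInt.intCast_real_norm] at hsq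
  have h4 : (2 : ℝ) ^ 2 = 4 := by norm_num
  rw [h4] at hsq
  exact_mod_cast hsq

lemma norm_ne_zero {ξ : GaussSqrt} (hξ : ξ ≠ 0) : norm ξ ≠ 0 := by
  intro h
  rw [norm_eq, sub_eq_zero] at h
  have hN := congrArg Zsqrtd.norm h
  rw [Zsqrtd.norm_mul, pow_two, pow_two, Zsqrtd.norm_mul, Zsqrtd.norm_mul] at hN
  have h2 : (⟨ξ.re.norm, ξ.im.norm⟩ : ℤ√2) = 0 := by
    refine (Zsqrtd.norm_eq_zero (d := 2) ?_ _).mp ?_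
    · exact fun n hn => Int.prime_two.irreducible.not_isSquare ⟨n, hn⟩
    · rw [Zsqrtd.norm_def, hN]
      simp [Zsqrtd.norm_def]
      ring
  obtain ⟨hre, him⟩ := Zsqrtd.ext_iff.mp h2
  exact hξ <|
    QuadraticAlgebra.ext (GaussianInt.norm_eq_zero.mp hre) (GaussianInt.norm_eq_zero.mp him)

lemma exists_norm_eq_of_isUnit {u : ℤ[i]} (hu : IsUnit u) : ∃ ξ : GaussSqrt, norm ξ = u := by
  obtain ⟨k, rfl⟩ := exists_sqrtd_pow_eq_of_isUnit hu
  have hι : norm (⟨ι, ι⟩ : GaussSqrt) = ι := by rw [norm_eq]; rfl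
  exact ⟨⟨ι, ι⟩ ^ k, by rw [map_pow, hι]⟩

lemma exists_norm_eq_mul_of_associated {m n c : ℤ[i]} (hmn : Associated m n)
    (h : ∃ ξ : GaussSqrt, norm ξ = m * c) : ∃ ξ : GaussSqrt, norm ξ = n * c := by
  obtain ⟨u, rfl⟩ := hmn
  obtain ⟨ξ, hξ⟩ := h
  obtain ⟨η, hη⟩ := exists_norm_eq_of_isUnit u.isUnit
  exact ⟨ξ * η, by rw [map_mul, hξ, hη]; ring⟩

/-- Dividing by `√(1 + i)`, an element of norm `-(1 + i)`. -/
lemma exists_norm_eq_neg_of_norm_eq_mul {ξ : GaussSqrt} {n : ℤ[i]} (h : norm ξ = (1 + ι) * n) :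
    ∃ η : GaussSqrt, norm η = -n := by
  rw [norm_eq] at h
  obtain ⟨y, hy⟩ : 1 + ι ∣ ξ.re :=
    prime_one_add_sqrtd.dvd_of_dvd_pow (n := 2) ⟨n + ξ.im ^ 2, by linear_combination h⟩
  refine ⟨⟨ξ.im, y⟩, mul_left_cancel₀ prime_one_add_sqrtd.ne_zero ?_⟩
  rw [hy] at h
  rw [norm_eq]
  linear_combination -h

/-- Lattice reduction produces an element of norm `m p` with `|m|² ≤ 3`; then `m` is `1` or `1 + i`
up to units, and neither factor changes solvability. -/
theorem exists_norm_eq_mul_of_dvd_sq_sub {p : ℕ} (hp : p ≠ 0) {a : ℤ[i]}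
    (ha : (p : ℤ[i]) ∣ a ^ 2 - (1 + ι)) {n : ℤ[i]} (hn : IsUnit n) :
    ∃ ξ : GaussSqrt, norm ξ = n * p := by
  have hp0 : (p : ℤ[i]) ≠ 0 := by exact_mod_cast hp
  obtain ⟨x, z, hne, hdvd, hle⟩ :=
    exists_dvd_sub_mul_and_sq_le (A := 2) (C := 3) (by norm_num) (by norm_num) a hp0
  set ξ : GaussSqrt := ⟨x, z⟩
  obtain ⟨m, hm⟩ : (p : ℤ[i]) ∣ norm ξ := by
    rw [show norm ξ = (x - a * z) * (x + a * z) + (a ^ 2 - (1 + ι)) * z ^ 2 by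
      rw [norm_eq]; ring]
    exact dvd_add (hdvd.mul_right _) (ha.mul_right _)
  have hm0 : m ≠ 0 := by
    rintro rfl
    refine norm_ne_zero (ξ := ξ) (fun h => ?_) (by rw [hm, mul_zero])
    exact hne.elim (absurd (congrArg QuadraticAlgebra.re h))
      (absurd (congrArg QuadraticAlgebra.im h))
  have hm3 : m.norm ≤ 3 := by
    have h4 := (four_mul_norm_norm_le ξ).trans hle
    rw [hm, Zsqrtd.norm_mul] at h4
    have := GaussianInt.norm_pos.mpr hp0
    nlinarith
  rw [mul_comm] at hm
  have hm1 := associated_one_iff_isUnit.mpr hn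
  rcases associated_one_or_of_norm_le_three hm0 hm3 with h1 | h1
  · exact exists_norm_eq_mul_of_associated (h1.trans hm1.symm) ⟨ξ, hm⟩
  · obtain ⟨η, hη⟩ := exists_norm_eq_mul_of_associated h1 ⟨ξ, hm⟩
    obtain ⟨θ, hθ⟩ := exists_norm_eq_neg_of_norm_eq_mul hη
    refine exists_norm_eq_mul_of_associated (m := -1) ?_ ⟨θ, by rw [hθ, neg_one_mul]⟩
    exact (Associated.refl (1 : ℤ[i])).neg_left.trans hm1.symm

variable {p : ℕ} {ξ : GaussSqrt}

lemma odd_norm_im_of_norm_eq (hp : Odd p) (h : norm ξ = ι * p) : Odd ξ.im.norm := by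
  obtain ⟨t, ht⟩ := hp
  have him := congrArg Zsqrtd.im h
  simp only [norm_eq, pow_two, Zsqrtd.im_sub, Zsqrtd.re_mul, Zsqrtd.im_mul, Zsqrtd.re_add,
    Zsqrtd.im_add, Zsqrtd.re_one, Zsqrtd.im_one, Zsqrtd.re_sqrtd, Zsqrtd.im_sqrtd,
    Zsqrtd.re_natCast, Zsqrtd.im_natCast] at him
  rw [gaussianInt_norm_eq]
  refine ⟨ξ.re.re * ξ.re.im - ξ.im.re * ξ.im.im + ξ.im.im ^ 2 - t - 1, ?_⟩
  push_cast [ht] at him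
  linear_combination -him

lemma isCoprime_of_norm_eq (hp : p.Prime) (hp2 : p ≠ 2) (h : norm ξ = ι * p) :
    IsCoprime ξ.re ξ.im := by
  refine IsRelPrime.isCoprime fun d hre him => ?_
  have hsq : Squarefree (p : ℤ[i]) := by
    refine (isRadical_zsqrtd_natCast hp ?_).squarefree (by exact_mod_cast hp.ne_zero)
    rw [mul_neg_one, dvd_neg]
    exact_mod_cast mt (Nat.prime_dvd_prime_iff_eq hp Nat.prime_two).mp hp2
  refine hsq d ?_
  have hdd : d * d ∣ norm ξ := by
    rw [norm_eq, pow_two, pow_two]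
    exact dvd_sub (mul_dvd_mul hre hre) ((mul_dvd_mul him him).mul_left _)
  rwa [h, isUnit_sqrtd.dvd_mul_left] at hdd

lemma isCoprime_two_mul_re_of_norm_eq (hp : p.Prime) (hp2 : p ≠ 2) (h : norm ξ = ι * p) :
    IsCoprime (2 * ξ.re) ξ.im := by
  obtain ⟨k, hk⟩ := odd_norm_im_of_norm_eq (hp.odd_of_ne_two hp2) h
  have h2 : IsCoprime 2 ξ.im := by
    refine ⟨-k, star ξ.im, ?_⟩
    rw [mul_comm (star ξ.im), ← Zsqrtd.norm_eq_mul_conj, hk]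
    push_cast
    ring
  exact h2.mul_left (isCoprime_of_norm_eq hp hp2 h)

end GaussSqrt

/-! ### Square roots of `1 + i` modulo `p` -/

/-- `1 + j` is a square root of `2 j`, so Euler's criterion for it is a condition on the biquadratic
characters of `2` and `-1`. -/
lemma isSquare_one_add_iff {p : ℕ} [Fact p.Prime] (hp8 : p % 8 = 1) {j : ZMod p}
    (hj : j ^ 2 = -1) :
    IsSquare (1 + j) ↔ (2 : ZMod p) ^ ((p - 1) / 4) = (-1) ^ ((p - 1) / 8) := by
  have h2 : (2 : ZMod p) ≠ 0 := Ring.two_ne_zero (by rw [ZMod.ringChar_zmod_n]; omega)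
  have hne : 1 + j ≠ 0 := fun h => h2 (by linear_combination (1 - j) * h + hj)
  have hsq : (1 + j) ^ 2 = 2 * j := by linear_combination hj
  have hsign : ((-1 : ZMod p) ^ ((p - 1) / 8)) * (-1) ^ ((p - 1) / 8) = 1 := by
    rw [← mul_pow, neg_one_mul, neg_neg, one_pow]
  have hpow : (1 + j) ^ (p / 2) = 2 ^ ((p - 1) / 4) * (-1) ^ ((p - 1) / 8) := by
    rw [show p / 2 = 2 * ((p - 1) / 4) by omega, pow_mul, hsq, mul_pow, ← hj, ← pow_mul,
      show 2 * ((p - 1) / 8) = (p - 1) / 4 by omega]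
  rw [ZMod.euler_criterion p hne, hpow, ← eq_mul_inv_iff_mul_eq₀ (by simp), one_mul,
    inv_eq_of_mul_eq_one_left hsign]

/-- If `r² = 1 + j` and `s² = 1 - j` in `𝔽_p` with `j² = -1`, then `(r + s)/2 + i (r - s)/(2j)` is a
square root of `1 + i`. -/
theorem exists_dvd_sq_sub_one_add_sqrtd {p : ℕ} (hp : p.Prime) (hp8 : p % 8 = 1)
    (h : (2 : ZMod p) ^ ((p - 1) / 4) = (-1) ^ ((p - 1) / 8)) :
    ∃ a : ℤ[i], (p : ℤ[i]) ∣ a ^ 2 - (1 + ι) := by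
  have : Fact p.Prime := ⟨hp⟩
  have h2 : (2 : ZMod p) ≠ 0 := Ring.two_ne_zero (by rw [ZMod.ringChar_zmod_n]; omega)
  obtain ⟨j, hj⟩ : IsSquare (-1 : ZMod p) := ZMod.exists_sq_eq_neg_one_iff.mpr (by omega)
  have hj2 : j ^ 2 = -1 := by rw [hj, pow_two]
  have hj0 : j ≠ 0 := by rintro rfl; simp at hj
  obtain ⟨r, hr⟩ := (isSquare_one_add_iff hp8 hj2).mpr h
  obtain ⟨s, hs⟩ := (isSquare_one_add_iff hp8 (j := -j) (by rw [neg_sq, hj2])).mpr h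
  obtain ⟨c, hc⟩ := ZMod.intCast_surjective ((r + s) / 2)
  obtain ⟨d, hd⟩ := ZMod.intCast_surjective ((r - s) / (2 * j))
  refine ⟨⟨c, d⟩, ?_⟩
  rw [← Int.cast_natCast, Zsqrtd.intCast_dvd, ← ZMod.intCast_zmod_eq_zero_iff_dvd,
    ← ZMod.intCast_zmod_eq_zero_iff_dvd]
  simp only [pow_two, Zsqrtd.re_sub, Zsqrtd.im_sub, Zsqrtd.re_mul, Zsqrtd.im_mul, Zsqrtd.re_add,
    Zsqrtd.im_add, Zsqrtd.re_one, Zsqrtd.im_one, Zsqrtd.re_sqrtd, Zsqrtd.im_sqrtd]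
  push_cast
  rw [hc, hd]
  constructor <;> field_simp
  · linear_combination ((r + s) ^ 2 - 4) * hj2 + 2 * (hr + hs)
  · linear_combination 2 * (hs - hr)

/-! ### Square roots of ideal classes -/

section ClassGroup

variable {R : Type*} [CommRing R] [IsDedekindDomain R] {H : Ideal R} {α a b z : R}

/-- Up to the common factor `H`, the ideals `(a)` and `(b)` are coprime with product `(z)²`. -/
lemma exists_mul_sq_eq_span_singleton (hHp : H.IsPrime) (hH0 : H ≠ ⊥)
    (hH : H ^ 2 = Ideal.span {α}) (hab : a * b = α * z ^ 2) (hsub : a - b ∈ H)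
    (hcop : IsCoprime (a + b) z) : ∃ A : Ideal R, H * A ^ 2 = Ideal.span {a} := by
  have hα : α ∈ H := Ideal.pow_le_self two_ne_zero (hH ▸ Ideal.mem_span_singleton_self α)
  have ha : a ∈ H := by
    rcases hHp.mem_or_mem (hab ▸ H.mul_mem_right _ hα) with h | h
    · exact h
    · simpa using H.add_mem hsub h
  have hb : b ∈ H := by simpa using H.sub_mem ha hsub
  obtain ⟨B, hB⟩ := Ideal.dvd_span_singleton.mpr ha
  obtain ⟨B', hB'⟩ := Ideal.dvd_span_singleton.mpr hb
  have haB : a ∈ B := Ideal.mul_le_right (hB ▸ Ideal.mem_span_singleton_self a)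
  have hbB' : b ∈ B' := Ideal.mul_le_right (hB' ▸ Ideal.mem_span_singleton_self b)
  have hBB' : B * B' = Ideal.span {z} ^ 2 := by
    refine mul_left_cancel₀ (pow_ne_zero 2 hH0) ?_
    calc H ^ 2 * (B * B') = (H * B) * (H * B') := by ring
      _ = H ^ 2 * Ideal.span {z} ^ 2 := by
        rw [← hB, ← hB', hH, Ideal.span_singleton_pow, Ideal.span_singleton_mul_span_singleton,
          Ideal.span_singleton_mul_span_singleton, hab]
  have hBcop : IsCoprime B B' := by
    obtain ⟨u, v, huv⟩ := hcop.pow_right (n := 2)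
    have hz : z ^ 2 ∈ B * B' := by
      rw [hBB', Ideal.span_singleton_pow]
      exact Ideal.mem_span_singleton_self _
    refine Ideal.isCoprime_iff_exists.mpr
      ⟨u * a, B.mul_mem_left u haB, u * b + v * z ^ 2, ?_, by linear_combination huv⟩
    exact B'.add_mem (B'.mul_mem_left u hbB') (B'.mul_mem_left v (Ideal.mul_le_right hz))
  obtain ⟨A, rfl⟩ := exists_eq_pow_of_mul_eq_pow_of_coprime hBcop hBB'
  exact ⟨A, hB.symm⟩

theorem exists_sq_eq_mk0 (hHp : H.IsPrime) (h0 : H ∈ (Ideal R)⁰) (hH : H ^ 2 = Ideal.span {α})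
    (hab : a * b = α * z ^ 2) (hsub : a - b ∈ H) (hcop : IsCoprime (a + b) z) :
    ∃ σ : ClassGroup R, σ ^ 2 = ClassGroup.mk0 ⟨H, h0⟩ := by
  have hH0 : H ≠ ⊥ := nonZeroDivisors.ne_zero h0
  obtain ⟨A, hA⟩ := exists_mul_sq_eq_span_singleton hHp hH0 hH hab hsub hcop
  have ha0 : a ≠ 0 := by
    rintro rfl
    have hα0 : α ≠ 0 := by
      rintro rfl
      exact pow_ne_zero 2 hH0 (hH.trans (Ideal.span_singleton_eq_bot.mpr rfl))
    have hz0 : z = 0 := by simpa [hα0] using hab.symm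
    rw [hz0, isCoprime_zero_right, zero_add] at hcop
    exact hHp.ne_top (H.eq_top_of_isUnit_mem (by simpa using hsub) hcop)
  have hA0 : A ∈ (Ideal R)⁰ := by
    refine mem_nonZeroDivisors_of_ne_zero ?_
    rintro rfl
    refine ha0 (Ideal.span_singleton_eq_bot.mp ?_)
    rw [← hA, zero_pow two_ne_zero, mul_zero, Ideal.zero_eq_bot]
  refine ⟨(ClassGroup.mk0 ⟨A, hA0⟩)⁻¹, ?_⟩
  rw [inv_pow, inv_eq_iff_mul_eq_one, ← map_pow, ← map_mul, mul_comm]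
  exact (ClassGroup.mk0_eq_one_iff (I := H * A ^ 2) (mul_mem h0 (pow_mem hA0 2))).mpr ⟨a, hA⟩

end ClassGroup

/-! ### Real quadratic fields -/

/-- The real quadratic field `ℚ(√d)` in coordinates; its norm and trace are rational. -/
abbrev QuadField (d : ℕ) : Type := QuadraticAlgebra ℚ (d : ℚ) 0

namespace QuadField

/-- The embedding `ℚ(√d) → ℝ` that makes `√d` positive. -/
def toReal (d : ℕ) : QuadField d →ₐ[ℚ] ℝ :=
  QuadraticAlgebra.lift ⟨√d, by simp [Algebra.smul_def]⟩

variable {d : ℕ}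

lemma toReal_apply (w : QuadField d) : toReal d w = w.re + w.im * √d := by
  simp [toReal, QuadraticAlgebra.lift, Algebra.smul_def]

lemma toReal_injective (hd : ¬ IsSquare d) : Function.Injective (toReal d) := by
  rw [injective_iff_map_eq_zero]
  intro w hw
  rw [toReal_apply] at hw
  have him : w.im = 0 := by
    by_contra him
    refine irrational_sqrt_natCast_iff.mpr hd ⟨-w.re / w.im, ?_⟩
    have : (w.im : ℝ) ≠ 0 := by exact_mod_cast him
    push_cast
    field_simp
    linarith
  refine QuadraticAlgebra.ext ?_ him
  simpa [him] using hw

lemma exists_two_mul_eq_intCast (hd : Squarefree d) {w : QuadField d} (hw : IsIntegral ℤ w) :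
    ∃ A B : ℤ, 2 * w.re = A ∧ 2 * w.im = B := by
  have htr := isIntegral_quadraticAlgebra_trace hw
  have hnorm : IsIntegral ℤ (algebraMap ℤ ℚ 4 * w.norm) :=
    isIntegral_algebraMap.mul (isIntegral_quadraticAlgebra_norm hw)
  have hd' : IsRadical (d : ℤ) := (Int.squarefree_natCast.mpr hd).isRadical
  have him : IsIntegral ℤ (2 * w.im) := by
    refine isIntegral_of_isIntegral_mul_sq hd' (by exact_mod_cast hd.ne_zero) ?_
    have hdisc : algebraMap ℤ ℚ d * (2 * w.im) ^ 2 = w.trace ^ 2 - algebraMap ℤ ℚ 4 * w.norm := by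
      simp only [QuadraticAlgebra.trace_def, QuadraticAlgebra.norm_def, eq_intCast,
        Int.cast_natCast, Int.cast_ofNat]
      ring
    exact hdisc ▸ (htr.pow 2).sub hnorm
  obtain ⟨A, hA⟩ := IsIntegrallyClosed.isIntegral_iff.mp htr
  obtain ⟨B, hB⟩ := IsIntegrallyClosed.isIntegral_iff.mp him
  exact ⟨A, B, by simpa [QuadraticAlgebra.trace_def] using hA.symm, hB.symm⟩

lemma norm_ne_two_of_isIntegral {p : ℕ} (hp : Squarefree (2 * p)) (hp16 : p % 16 = 9)
    {w : QuadField (2 * p)} (hw : IsIntegral ℤ w) : w.norm ≠ 2 := by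
  intro h
  obtain ⟨A, B, hA, hB⟩ := exists_two_mul_eq_intCast hp hw
  refine sq_sub_two_mul_mul_sq_ne_eight (n := p) (by exact_mod_cast hp16) A B ?_
  have : (A : ℚ) ^ 2 - 2 * p * B ^ 2 = 8 := by
    rw [← hA, ← hB]
    rw [QuadraticAlgebra.norm_def] at h
    push_cast at h
    linear_combination 4 * h
  exact_mod_cast this

end QuadField

/-! ### The field `ℚ(√(2p), i)` -/

section kfield

variable {p : ℕ}

lemma sqrt_mem_kfield : (√(2 * p) : ℂ) ∈ kfield p :=
  subset_adjoin _ _ (by simp)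

lemma I_mem_kfield : I ∈ kfield p :=
  subset_adjoin _ _ (by simp)

lemma sqrt_two_mul_sq (p : ℕ) : (√(2 * p) : ℂ) ^ 2 = 2 * p := by
  exact_mod_cast Real.sq_sqrt (show (0 : ℝ) ≤ 2 * p by positivity)

lemma exists_eq_toReal_add_mul_I {x : ℂ} (hx : x ∈ kfield p) :
    ∃ u v : QuadField (2 * p), x = QuadField.toReal _ u + QuadField.toReal _ v * I := by
  have hsqrt : (√(2 * p) : ℂ) ^ 2 = (2 * p : ℚ) := by
    rw [sqrt_two_mul_sq]; push_cast; rfl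
  have halg : ∀ x ∈ ({(√(2 * p) : ℂ), I} : Set ℂ), IsAlgebraic ℚ x := by
    rintro x (rfl | rfl)
    · exact (integral_of_pow_rat two_ne_zero hsqrt).isAlgebraic
    · exact (integral_of_pow_rat two_ne_zero (q := -1) (by simp)).isAlgebraic
  rw [kfield, ← mem_toSubalgebra, adjoin_toSubalgebra_of_isAlgebraic halg] at hx
  induction hx using Algebra.adjoin_induction with
  | mem x hx =>
    rcases hx with rfl | rfl
    · exact ⟨⟨0, 1⟩, 0, by simp [QuadField.toReal_apply]⟩
    · exact ⟨0, 1, by simp⟩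
  | algebraMap r => exact ⟨algebraMap ℚ _ r, 0, by simp⟩
  | add x y _ _ hx hy =>
    obtain ⟨u, v, rfl⟩ := hx
    obtain ⟨u', v', rfl⟩ := hy
    exact ⟨u + u', v + v', by push_cast [map_add]; ring⟩
  | mul x y _ _ hx hy =>
    obtain ⟨u, v, rfl⟩ := hx
    obtain ⟨u', v', rfl⟩ := hy
    refine ⟨u * u' - v * v', u * v' + v * u', ?_⟩
    push_cast [map_add, map_sub, map_mul]
    linear_combination (QuadField.toReal _ v : ℂ) * QuadField.toReal _ v' * I_sq

/-- The relative norm of `x` to `ℚ(√(2p))` is `|x|²`, a totally nonnegative number, so its norm to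
`ℚ` is a natural number. -/
lemma exists_toReal_eq_normSq (hp : ¬ IsSquare (2 * p)) (x : 𝓞 (kfield p)) :
    ∃ w : QuadField (2 * p), QuadField.toReal _ w = normSq (x : kfield p) ∧ IsIntegral ℤ w ∧
      ∃ n : ℕ, w.norm = n := by
  obtain ⟨u, v, hx⟩ := exists_eq_toReal_add_mul_I (x : kfield p).2
  have hw : QuadField.toReal _ (u ^ 2 + v ^ 2) = normSq (x : kfield p) := by
    rw [hx, normSq_add_mul_I, map_add, map_pow, map_pow]
  have hxint : IsIntegral ℤ ((x : kfield p) : ℂ) :=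
    (RingOfIntegers.isIntegral_coe x).map (algebraMap (kfield p) ℂ).toIntAlgHom
  have hwint : IsIntegral ℤ (u ^ 2 + v ^ 2) := by
    rw [← isIntegral_algHom_iff ((QuadField.toReal _).restrictScalars ℤ)
      (QuadField.toReal_injective hp), AlgHom.restrictScalars_apply, hw,
      ← isIntegral_algebraMap_iff (algebraMap ℝ ℂ).injective, coe_algebraMap,
      normSq_eq_conj_mul_self]
    exact (hxint.map (starRingEnd ℂ).toIntAlgHom).mul hxint
  obtain ⟨n, hn⟩ := IsIntegrallyClosed.isIntegral_iff.mp (isIntegral_quadraticAlgebra_norm hwint)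
  have hn0 : 0 ≤ n := by
    have : (0 : ℚ) ≤ n := by
      rw [← eq_intCast (algebraMap ℤ ℚ) n, hn, quadraticAlgebra_norm_sq_add_sq]
      positivity
    exact_mod_cast this
  lift n to ℕ using hn0
  exact ⟨_, hw, hwint, n, by simpa using hn.symm⟩

variable {H : Ideal (𝓞 (kfield p))} {α : 𝓞 (kfield p)}

/-- If `H = (h)`, then `h² ε = 1 + i` with a unit `ε`, so the relative norm of `h` has norm `2`. -/
theorem not_isPrincipal_of_sq_eq_span (hp : Squarefree (2 * p)) (hp16 : p % 16 = 9)
    (hα : ((α : kfield p) : ℂ) = 1 + I) (hH : H ^ 2 = Ideal.span {α}) : ¬ H.IsPrincipal := by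
  rintro ⟨h, rfl⟩
  have hsq : ¬ IsSquare (2 * p) := by
    rintro ⟨r, hr⟩
    obtain ⟨s, rfl⟩ : 2 ∣ r :=
      Nat.prime_two.dvd_of_dvd_pow (n := 2) ⟨p, by rw [pow_two, ← hr]⟩
    have : p = 2 * (s * s) := by linarith
    omega
  have hinj := QuadField.toReal_injective hsq
  rw [Ideal.submodule_span_eq, Ideal.span_singleton_pow,
    Ideal.span_singleton_eq_span_singleton] at hH
  obtain ⟨ε, hε⟩ := hH
  obtain ⟨w, hw, hwint, n, hn⟩ := exists_toReal_eq_normSq hsq h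
  obtain ⟨u, hu, -, k, hk⟩ := exists_toReal_eq_normSq hsq (ε : 𝓞 (kfield p))
  obtain ⟨v, hv, -, l, hl⟩ := exists_toReal_eq_normSq hsq (↑ε⁻¹ : 𝓞 (kfield p))
  have huv : u * v = 1 := by
    apply hinj
    simp [hu, hv]
  have hwu : w ^ 2 * u = 2 := by
    apply hinj
    have := congrArg (fun x : 𝓞 (kfield p) => normSq (x : kfield p)) hε
    have h2 : normSq (1 + I) = 2 := by norm_num [normSq_apply]
    simp only [map_mul, map_pow, hα, h2, IntermediateField.coe_mul,
      IntermediateField.coe_pow] at this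
    rw [map_mul, map_pow, map_ofNat, hw, hu]
    exact this
  have hkl : k * l = 1 := by
    have := congrArg QuadraticAlgebra.norm huv
    rw [map_mul, map_one, hk, hl] at this
    exact_mod_cast this
  have hnk : n ^ 2 * k = 2 ^ 2 := by
    have := congrArg QuadraticAlgebra.norm hwu
    rw [map_mul, map_pow, hn, hk, ← Nat.cast_ofNat (R := QuadField (2 * p)),
      QuadraticAlgebra.norm_natCast] at this
    exact_mod_cast this
  rw [Nat.eq_one_of_mul_eq_one_right hkl, mul_one] at hnk
  have hn2 : n = 2 := Nat.pow_left_injective two_ne_zero hnk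
  refine QuadField.norm_ne_two_of_isIntegral hp hp16 hwint ?_
  rw [hn, hn2, Nat.cast_ofNat]

/-- `i` as an algebraic integer of `ℚ(√(2p), i)`. -/
def kfieldI (p : ℕ) : 𝓞 (kfield p) :=
  ⟨⟨I, I_mem_kfield⟩, .of_pow two_pos <| by
    rw [show (⟨I, I_mem_kfield⟩ : kfield p) ^ 2 = -1 from Subtype.ext (by simp)]
    exact isIntegral_one.neg⟩

lemma coe_kfieldI : ((kfieldI p : kfield p) : ℂ) = I := rfl

/-- The inclusion of `ℤ[i]` into the ring of integers of `ℚ(√(2p), i)`. -/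
def gaussianIntHom (p : ℕ) : ℤ[i] →+* 𝓞 (kfield p) :=
  Zsqrtd.lift ⟨kfieldI p, RingOfIntegers.ext (Subtype.ext (by simp [coe_kfieldI]))⟩

lemma coe_gaussianIntHom (g : ℤ[i]) : ((gaussianIntHom p g : kfield p) : ℂ) = g := by
  simp [gaussianIntHom, GaussianInt.toComplex_def, coe_kfieldI]

/-- The square root is `(1 + i) √(2p) / 2`. -/
lemma exists_sq_eq_gaussianIntHom (p : ℕ) : ∃ ω, ω ^ 2 = gaussianIntHom p (ι * p) := by
  let ω : kfield p := (1 + ⟨I, I_mem_kfield⟩) * ⟨_, sqrt_mem_kfield⟩ / 2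
  have hω : ω ^ 2 = (gaussianIntHom p (ι * p) : kfield p) := by
    refine Subtype.ext ?_
    rw [coe_gaussianIntHom, map_mul, map_natCast, toComplex_sqrtd]
    change ((1 + I) * √(2 * p) / 2) ^ 2 = I * p
    linear_combination ((1 + I) ^ 2 / 4) * sqrt_two_mul_sq p + (p / 2 : ℂ) * I_sq
  have hint : IsIntegral ℤ ω := .of_pow two_pos (hω ▸ RingOfIntegers.isIntegral_coe _)
  exact ⟨⟨ω, hint⟩, RingOfIntegers.ext hω⟩

theorem exists_sq_eq_mk0_of_sq_eq_span (hp : p.Prime) (hp8 : p % 8 = 1)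
    (h2p : (2 : ZMod p) ^ ((p - 1) / 4) = (-1) ^ ((p - 1) / 8)) (hHp : H.IsPrime)
    (hα : ((α : kfield p) : ℂ) = 1 + I) (hH : H ^ 2 = Ideal.span {α})
    (h0 : H ∈ (Ideal (𝓞 (kfield p)))⁰) :
    ∃ σ : ClassGroup (𝓞 (kfield p)), σ ^ 2 = ClassGroup.mk0 ⟨H, h0⟩ := by
  have hp2 : p ≠ 2 := by rintro rfl; omega
  obtain ⟨a, ha⟩ := exists_dvd_sq_sub_one_add_sqrtd hp hp8 h2p
  obtain ⟨ξ, hξ⟩ := GaussSqrt.exists_norm_eq_mul_of_dvd_sq_sub hp.ne_zero ha isUnit_sqrtd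
  obtain ⟨ω, hω⟩ := exists_sq_eq_gaussianIntHom p
  set φ := gaussianIntHom p
  have hαφ : α = φ (1 + ι) := by
    refine RingOfIntegers.ext (Subtype.ext ?_)
    rw [hα, coe_gaussianIntHom, map_add, map_one, toComplex_sqrtd]
  have h2H : (2 : 𝓞 (kfield p)) ∈ H := by
    rw [← map_ofNat φ 2, show (2 : ℤ[i]) = (1 + ι) * (1 - ι) from rfl, map_mul, ← hαφ]
    exact H.mul_mem_right _ (Ideal.pow_le_self two_ne_zero (hH ▸ Ideal.mem_span_singleton_self α))
  refine exists_sq_eq_mk0 (a := φ ξ.re - ω) (b := φ ξ.re + ω) (z := φ ξ.im) hHp h0 hH ?_ ?_ ?_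
  · have := congrArg φ hξ
    rw [GaussSqrt.norm_eq, map_sub, map_mul, map_pow, map_pow, ← hω, ← hαφ] at this
    linear_combination this
  · rw [show φ ξ.re - ω - (φ ξ.re + ω) = 2 * -ω by ring]
    exact H.mul_mem_right _ h2H
  · rw [show φ ξ.re - ω + (φ ξ.re + ω) = φ (2 * ξ.re) by rw [map_mul, map_ofNat]; ring]
    exact (GaussSqrt.isCoprime_two_mul_re_of_norm_eq hp hp2 hξ).map φ

end kfield

theorem statement_19 (p : ℕ) (hp : p.Prime) (hp8 : p % 8 = 1)
    (h2p4 : (2 : ZMod p) ^ ((p - 1) / 4) = -1)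
    (hp24 : (-1 : ℤ) ^ ((p - 1) / 8) = -1)
    -- H is the prime of O_k above 1 + i :
    (H : Ideal (𝓞 (kfield p))) (hHpr : H.IsPrime)
    (α : 𝓞 (kfield p)) (hα : ((α : kfield p) : ℂ) = 1 + Complex.I)
    (hH : H ^ 2 = Ideal.span {α})
    (h0 : H ∈ (Ideal (𝓞 (kfield p)))⁰) :
    orderOf (ClassGroup.mk0 ⟨H, h0⟩) = 2 ∧
    ∃ σ : ClassGroup (𝓞 (kfield p)), orderOf σ = 4 ∧ σ ^ 2 = ClassGroup.mk0 ⟨H, h0⟩ := by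
  have hp16 : p % 16 = 9 := by
    have hodd : (p - 1) / 8 % 2 = 1 := by
      rw [← Nat.odd_iff, ← neg_one_pow_eq_neg_one_iff_odd (show (-1 : ℤ) ≠ 1 by decide), hp24]
    omega
  have hp_sqf : Squarefree (2 * p) :=
    Nat.squarefree_mul_iff.mpr ⟨Nat.coprime_two_left.mpr (hp.odd_of_ne_two (by omega)),
      Nat.prime_two.squarefree, hp.squarefree⟩
  have h2p : (2 : ZMod p) ^ ((p - 1) / 4) = (-1) ^ ((p - 1) / 8) := by
    rw [h2p4]; exact_mod_cast congrArg (Int.cast : ℤ → ZMod p) hp24.symm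
  have hne : ClassGroup.mk0 ⟨H, h0⟩ ≠ 1 := by
    rw [Ne, ClassGroup.mk0_eq_one_iff]
    exact not_isPrincipal_of_sq_eq_span hp_sqf hp16 hα hH
  have hsq : ClassGroup.mk0 ⟨H, h0⟩ ^ 2 = 1 := by
    rw [← map_pow]
    exact (ClassGroup.mk0_eq_one_iff (I := H ^ 2) (pow_mem h0 2)).mpr ⟨α, hH⟩
  obtain ⟨σ, hσ⟩ := exists_sq_eq_mk0_of_sq_eq_span hp hp8 h2p hHpr hα hH h0
  refine ⟨orderOf_eq_prime hsq hne, σ, ?_, hσ⟩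
  refine orderOf_eq_prime_pow (p := 2) (n := 1) ?_ ?_
  · rwa [pow_one, hσ]
  · rw [show 2 ^ (1 + 1) = 2 * 2 from rfl, pow_mul, hσ, hsq]
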